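/- Let Ω ⊆ ℝ³ be open, μ, λ, μ_c ∈ ℝ, u : ℝ³ → ℝ³ twice continuously differentiable on Ω, and ω : ℝ³ → ℝ³ continuously differentiable on Ω. Then at every point of Ω the balance-of-linear-momentum identity div(C₁(grad u − mskw ω)) = div(𝒞(sym grad u)) − μ_c·curl(½ curl u − ω) holds, where div acts row-wise on matrix fields; i.e. the divergence of the full (generally nonsymmetric) Cosserat stress splits into the divergence of the symmetric elasticity stress σ = 𝒞(sym grad u) and the curl coupling term. -/

import Mathlib

open Matrix

noncomputable section

/-- Vectors in ℝ³. -/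
abbrev V3 := Fin 3 → ℝ
/-- 3×3 real matrices. -/
abbrev M3 := Matrix (Fin 3) (Fin 3) ℝ

/-- Euclidean inner product on ℝ³. -/
def dot3 (u v : V3) : ℝ := ∑ i, u i * v i

/-- Frobenius inner product ⟨A,B⟩ = tr(AᵀB). -/
def frobInner (A B : M3) : ℝ := Matrix.trace (Aᵀ * B)

/-- Symmetric part of a matrix. -/
def symPart (A : M3) : M3 := (1/2 : ℝ) • (A + Aᵀ)

/-- Skew-symmetric part of a matrix. -/
def skwPart (A : M3) : M3 := (1/2 : ℝ) • (A - Aᵀ)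

/-- mskw : ℝ³ → ℝ^{3×3}. -/
def mskw (u : V3) : M3 :=
  !![0, -u 2, u 1; u 2, 0, -u 0; -u 1, u 0, 0]

/-- vskw : ℝ^{3×3} → ℝ³. -/
def vskw (A : M3) : V3 :=
  ![(A 2 1 - A 1 2)/2, (A 0 2 - A 2 0)/2, (A 1 0 - A 0 1)/2]

/-- Partial derivative ∂ⱼ f (Fréchet derivative in the j-th coordinate direction). -/
def pd (j : Fin 3) (f : V3 → ℝ) (x : V3) : ℝ := fderiv ℝ f x (Pi.single j 1)

/-- Jacobian matrix (grad v)ᵢⱼ = ∂ⱼ vᵢ of a vector field. -/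
def vgrad (v : V3 → V3) (x : V3) : M3 :=
  Matrix.of fun i j => pd j (fun y => v y i) x

/-- Divergence of a vector field. -/
def vdiv (v : V3 → V3) (x : V3) : ℝ :=
  pd 0 (fun y => v y 0) x + pd 1 (fun y => v y 1) x + pd 2 (fun y => v y 2) x

/-- Curl of a vector field. -/
def vcurl (v : V3 → V3) (x : V3) : V3 :=
  ![pd 1 (fun y => v y 2) x - pd 2 (fun y => v y 1) x,
    pd 2 (fun y => v y 0) x - pd 0 (fun y => v y 2) x,
    pd 0 (fun y => v y 1) x - pd 1 (fun y => v y 0) x]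

/-- Row-wise curl of a matrix field. -/
def mcurl (M : V3 → M3) (x : V3) : M3 :=
  Matrix.of fun i j => vcurl (fun y => M y i) x j

/-- Row-wise divergence of a matrix field. -/
def mdiv (M : V3 → M3) (x : V3) : V3 :=
  fun i => vdiv (fun y => M y i) x

/-- The algebraic operator 𝒮(A) = Aᵀ − (tr A)·I. -/
def Sop (A : M3) : M3 := Aᵀ - (Matrix.trace A) • (1 : M3)

/-- The inverse 𝒮⁻¹(B) = Bᵀ − ½(tr B)·I. -/
def Sinv (B : M3) : M3 := Bᵀ - ((1/2 : ℝ) * Matrix.trace B) • (1 : M3)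

/-- Cosserat material law C₁(ε) = 2μ sym ε + λ(tr ε)I + μ_c skw ε. -/
def C1 (μ lam μc : ℝ) (ε : M3) : M3 :=
  (2*μ) • symPart ε + (lam * Matrix.trace ε) • (1 : M3) + μc • skwPart ε

/-- Elasticity tensor 𝒞(ε) = 2μ sym ε + λ(tr ε)I. -/
def Cel (μ lam : ℝ) (ε : M3) : M3 :=
  (2*μ) • symPart ε + (lam * Matrix.trace ε) • (1 : M3)

/-- Curvature material law C₂(ε) = (γ+β) sym ε + α(tr ε)I + (γ−β) skw ε. -/
def C2mat (α β γ : ℝ) (ε : M3) : M3 :=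
  (γ+β) • symPart ε + (α * Matrix.trace ε) • (1 : M3) + (γ-β) • skwPart ε

/-!
The matrix `mskw w` is skew-symmetric, so subtracting it leaves the symmetric part of the strain
alone, and `C₁(A - mskw w) = 𝒞(sym A) + μ_c mskw (vskw A - w)` pointwise, for an arbitrary matrix
`A`. Since `div (mskw w) = -curl w`, taking divergences gives the coupling term. Only
`vskw (grad u) = ½ curl u` involves the displacement, and no second derivatives are interchanged.
-/

section Algebra

variable {A S : M3}

lemma isSymm_symPart (A : M3) : (symPart A).IsSymm := by
  rw [Matrix.IsSymm, symPart, transpose_smul, transpose_add, transpose_transpose, add_comm]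

lemma symPart_eq_self_of_isSymm (hA : A.IsSymm) : symPart A = A := by
  rw [symPart, hA.eq]
  module

lemma trace_symPart (A : M3) : (symPart A).trace = A.trace := by
  rw [symPart, trace_smul, trace_add, trace_transpose, smul_eq_mul]
  ring

lemma symPart_sub_of_transpose_eq_neg (A : M3) (hS : Sᵀ = -S) : symPart (A - S) = symPart A := by
  rw [symPart, symPart, transpose_sub, hS]
  module

lemma skwPart_sub_of_transpose_eq_neg (A : M3) (hS : Sᵀ = -S) :
    skwPart (A - S) = skwPart A - S := by
  rw [skwPart, skwPart, transpose_sub, hS]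
  module

lemma transpose_mskw (w : V3) : (mskw w)ᵀ = -mskw w := by
  ext i j
  fin_cases i <;> fin_cases j <;> simp [mskw]

lemma mskw_sub (v w : V3) : mskw (v - w) = mskw v - mskw w := by
  ext i j
  fin_cases i <;> fin_cases j <;> simp [mskw] <;> ring

lemma mskw_vskw (A : M3) : mskw (vskw A) = skwPart A := by
  ext i j
  fin_cases i <;> fin_cases j <;> simp [mskw, vskw, skwPart] <;> ring

lemma Cel_symPart (μ lam : ℝ) (A : M3) : Cel μ lam (symPart A) = Cel μ lam A := by
  rw [Cel, Cel, symPart_eq_self_of_isSymm (isSymm_symPart A), trace_symPart]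

lemma C1_eq_Cel_symPart_add (μ lam μc : ℝ) (A : M3) :
    C1 μ lam μc A = Cel μ lam (symPart A) + μc • skwPart A := by
  rw [Cel_symPart, Cel, C1]

lemma C1_sub_mskw (μ lam μc : ℝ) (A : M3) (w : V3) :
    C1 μ lam μc (A - mskw w) = Cel μ lam (symPart A) + μc • mskw (vskw A - w) := by
  rw [C1_eq_Cel_symPart_add, symPart_sub_of_transpose_eq_neg A (transpose_mskw w),
    skwPart_sub_of_transpose_eq_neg A (transpose_mskw w), mskw_sub, mskw_vskw]

end Algebra

section PartialDerivative

variable {f g : V3 → ℝ} {x : V3}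

lemma pd_const (j : Fin 3) (c : ℝ) (x : V3) : pd j (fun _ => c) x = 0 := by
  simp [pd]

lemma pd_neg (j : Fin 3) (f : V3 → ℝ) (x : V3) : pd j (fun y => -f y) x = -pd j f x := by
  simp [pd, fderiv_fun_neg]

lemma pd_const_mul (j : Fin 3) (c : ℝ) (f : V3 → ℝ) (x : V3) :
    pd j (fun y => c * f y) x = c * pd j f x := by
  have h : fderiv ℝ (fun y => c * f y) x = c • fderiv ℝ f x :=
    congrFun (fderiv_const_smul_field c) x
  rw [pd, h, _root_.smul_apply, smul_eq_mul, pd]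

lemma pd_add (j : Fin 3) (hf : DifferentiableAt ℝ f x) (hg : DifferentiableAt ℝ g x) :
    pd j (fun y => f y + g y) x = pd j f x + pd j g x := by
  rw [pd, fderiv_fun_add hf hg, _root_.add_apply, pd, pd]

lemma contDiffAt_pd {m n : WithTop ℕ∞} (j : Fin 3) (hf : ContDiffAt ℝ n f x) (hmn : m + 1 ≤ n) :
    ContDiffAt ℝ m (pd j f) x :=
  (hf.fderiv_right hmn).clm_apply contDiffAt_const

end PartialDerivative

section DifferentialOperators

variable {x : V3} {A B : V3 → M3} {w : V3 → V3}

lemma mdiv_add (hA : ∀ i j, DifferentiableAt ℝ (fun y => A y i j) x)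
    (hB : ∀ i j, DifferentiableAt ℝ (fun y => B y i j) x) :
    mdiv (fun y => A y + B y) x = mdiv A x + mdiv B x := by
  ext i
  simp only [mdiv, vdiv, Pi.add_apply, Matrix.add_apply, pd_add _ (hA i _) (hB i _)]
  ring

lemma mdiv_const_smul (c : ℝ) (A : V3 → M3) (x : V3) :
    mdiv (fun y => c • A y) x = c • mdiv A x := by
  ext i
  simp only [mdiv, vdiv, Pi.smul_apply, Matrix.smul_apply, smul_eq_mul, pd_const_mul]
  ring

lemma mdiv_mskw (w : V3 → V3) (x : V3) : mdiv (fun y => mskw (w y)) x = -vcurl w x := by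
  ext i
  fin_cases i <;> simp [mdiv, vdiv, vcurl, mskw, pd_neg, pd_const] <;> ring

lemma vskw_vgrad (u : V3 → V3) (x : V3) : vskw (vgrad u x) = (1/2 : ℝ) • vcurl u x := by
  ext i
  fin_cases i <;> simp [vskw, vgrad, vcurl] <;> ring

lemma differentiableAt_vgrad_apply {u : V3 → V3} (hu : ContDiffAt ℝ 2 u x) (i j : Fin 3) :
    DifferentiableAt ℝ (fun y => vgrad u y i j) x :=
  (contDiffAt_pd j (contDiffAt_pi.1 hu i) one_add_one_eq_two.le).differentiableAt one_ne_zero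

lemma differentiableAt_mskw_apply (hw : DifferentiableAt ℝ w x) (i j : Fin 3) :
    DifferentiableAt ℝ (fun y => mskw (w y) i j) x := by
  have h := differentiableAt_pi.1 hw
  fin_cases i <;> fin_cases j <;> simp [mskw, h]

lemma differentiableAt_vskw (hA : ∀ i j, DifferentiableAt ℝ (fun y => A y i j) x) :
    DifferentiableAt ℝ (fun y => vskw (A y)) x := by
  have h (i j k l) : DifferentiableAt ℝ (fun y => (A y i j - A y k l) / 2) x := by
    fun_prop (disch := exact hA _ _)
  refine differentiableAt_pi.2 fun i => ?_
  fin_cases i <;> exact h _ _ _ _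

lemma differentiableAt_Cel_apply (μ lam : ℝ) (hA : ∀ i j, DifferentiableAt ℝ (fun y => A y i j) x)
    (i j : Fin 3) : DifferentiableAt ℝ (fun y => Cel μ lam (A y) i j) x := by
  simp only [Cel, symPart, Matrix.trace, Matrix.add_apply, Matrix.smul_apply,
    Matrix.transpose_apply, Matrix.diag_apply, smul_eq_mul]
  fun_prop (disch := exact hA _ _)

end DifferentialOperators

theorem stmt18_general {A : V3 → M3} {ω : V3 → V3} {x : V3} (μ lam μc : ℝ)
    (hA : ∀ i j, DifferentiableAt ℝ (fun y => A y i j) x) (hω : DifferentiableAt ℝ ω x) :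
    mdiv (fun y => C1 μ lam μc (A y - mskw (ω y))) x =
      mdiv (fun y => Cel μ lam (symPart (A y))) x - μc • vcurl (fun y => vskw (A y) - ω y) x := by
  have hCel (i j) : DifferentiableAt ℝ (fun y => Cel μ lam (symPart (A y)) i j) x := by
    simpa only [Cel_symPart] using differentiableAt_Cel_apply μ lam hA i j
  have hskew (i j) : DifferentiableAt ℝ (fun y => (μc • mskw (vskw (A y) - ω y)) i j) x :=
    (differentiableAt_mskw_apply ((differentiableAt_vskw hA).sub hω) i j).const_smul μc
  simp only [C1_sub_mskw]
  rw [mdiv_add hCel hskew, mdiv_const_smul, mdiv_mskw, smul_neg, sub_eq_add_neg]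

/-- Balance of linear momentum:
div(C₁(grad u − mskw ω)) = div(𝒞(sym grad u)) − μ_c curl(½ curl u − ω). -/
theorem stmt18 (Ω : Set V3) (hΩ : IsOpen Ω) (μ lam μc : ℝ) (u ω : V3 → V3)
    (hu : ContDiffOn ℝ 2 u Ω) (hω : ContDiffOn ℝ 1 ω Ω) :
    ∀ x ∈ Ω,
      mdiv (fun y => C1 μ lam μc (vgrad u y - mskw (ω y))) x =
        mdiv (fun y => Cel μ lam (symPart (vgrad u y))) x -
        μc • vcurl (fun y => (1/2 : ℝ) • vcurl u y - ω y) x := by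
  intro x hx
  have hΩx := hΩ.mem_nhds hx
  simpa only [vskw_vgrad] using stmt18_general μ lam μc
    (differentiableAt_vgrad_apply (hu.contDiffAt hΩx))
    ((hω.contDiffAt hΩx).differentiableAt one_ne_zero)
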